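/- Let (k, [·,·]) be a real Lie algebra and k* its dual space, with coadjoint action ad*_u defined by ⟨ad*_u η, w⟩ := −⟨η, [u,w]⟩ for u,w ∈ k, η ∈ k*. Set g̃₋₁ := ℝ and g̃₀ := k ⊕ k*, and define: l̃₁ := 0; l̃₂((u,ξ),(v,η)) := ( [u,v], ad*_u η − ad*_v ξ ); l̃₂((u,ξ),r) := 0 for r ∈ ℝ; l̃₃((u,ξ),(v,η),(w,ζ)) := −½( ⟨ζ,[u,v]⟩ + ⟨ξ,[v,w]⟩ + ⟨η,[w,u]⟩ ). Then (g̃₀, g̃₋₁, l̃₁, l̃₂, l̃₃) is a 2-term L∞-algebra (the 2-term L∞-algebra of string type). -/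

import Mathlib

/-- A 2-term L∞-algebra over ℝ. -/
structure TwoTermLinfty (G0 G1 : Type*) [AddCommGroup G0] [Module ℝ G0]
    [AddCommGroup G1] [Module ℝ G1] where
  l1 : G1 →ₗ[ℝ] G0
  l2 : G0 →ₗ[ℝ] G0 →ₗ[ℝ] G0
  l2' : G0 →ₗ[ℝ] G1 →ₗ[ℝ] G1
  l3 : G0 →ₗ[ℝ] G0 →ₗ[ℝ] G0 →ₗ[ℝ] G1
  skew : ∀ x y, l2 x y = - l2 y x
  alt₁ : ∀ x y z, l3 x y z = - l3 y x z
  alt₂ : ∀ x y z, l3 x y z = - l3 x z y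
  ident_a : ∀ x m, l1 (l2' x m) = l2 x (l1 m)
  ident_b : ∀ m n, l2' (l1 m) n = - l2' (l1 n) m
  ident_c : ∀ x y z,
    l2 x (l2 y z) + l2 y (l2 z x) + l2 z (l2 x y) = l1 (l3 x y z)
  ident_d : ∀ x y m,
    l3 x y (l1 m) = l2' x (l2' y m) - l2' y (l2' x m) - l2' (l2 x y) m
  ident_e : ∀ w x y z,
    l3 (l2 w x) y z - l3 (l2 w y) x z + l3 (l2 w z) x y + l3 (l2 x y) w z
      - l3 (l2 x z) w y + l3 (l2 y z) w x
    = l2' w (l3 x y z) - l2' x (l3 w y z) + l2' y (l3 w x z) - l2' z (l3 w x y)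

/-- The coadjoint action: `⟨ad*_u η, w⟩ = −⟨η, [u,w]⟩`. -/
noncomputable def coad {k : Type*} [LieRing k] [LieAlgebra ℝ k] (u : k)
    (η : Module.Dual ℝ k) : Module.Dual ℝ k :=
  -(η ∘ₗ LieAlgebra.ad ℝ k u)

/-- The bracket `l̃₂` as a bilinear map. -/
noncomputable def stringL2 (k : Type*) [LieRing k] [LieAlgebra ℝ k] :
    (k × Module.Dual ℝ k) →ₗ[ℝ] (k × Module.Dual ℝ k) →ₗ[ℝ] (k × Module.Dual ℝ k) :=
  LinearMap.mk₂ ℝ (fun a b => (⁅a.1, b.1⁆, coad a.1 b.2 - coad b.1 a.2))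
    (by
      intro a b c
      ext1
      · simp
      · ext t; simp [coad]; ring)
    (by
      intro r a b
      ext1
      · simp
      · ext t; simp [coad])
    (by
      intro a b c
      ext1
      · simp
      · ext t; simp [coad]; ring)
    (by
      intro r a b
      ext1
      · simp
      · ext t; simp [coad])

/-- The map `l̃₃` as a trilinear map. -/
noncomputable def stringL3 (k : Type*) [LieRing k] [LieAlgebra ℝ k] :
    (k × Module.Dual ℝ k) →ₗ[ℝ] (k × Module.Dual ℝ k) →ₗ[ℝ]
      (k × Module.Dual ℝ k) →ₗ[ℝ] ℝ :=
  LinearMap.mk₂ ℝ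
    (fun a b =>
      { toFun := fun c =>
          -(1/2 : ℝ) • (c.2 ⁅a.1, b.1⁆ + a.2 ⁅b.1, c.1⁆ + b.2 ⁅c.1, a.1⁆)
        map_add' := by intro c d; simp; ring
        map_smul' := by intro r c; simp; ring })
    (by intro a b c; apply LinearMap.ext; intro d; simp; ring)
    (by intro r a b; apply LinearMap.ext; intro d; simp; ring)
    (by intro a b c; apply LinearMap.ext; intro d; simp; ring)
    (by intro r a b; apply LinearMap.ext; intro d; simp; ring)

theorem stringL2_apply (k : Type*) [LieRing k] [LieAlgebra ℝ k]
    (a b : k × Module.Dual ℝ k) :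
    stringL2 k a b = (⁅a.1, b.1⁆, coad a.1 b.2 - coad b.1 a.2) := rfl

theorem stringL3_apply (k : Type*) [LieRing k] [LieAlgebra ℝ k]
    (a b c : k × Module.Dual ℝ k) :
    stringL3 k a b c =
      -(1/2 : ℝ) • (c.2 ⁅a.1, b.1⁆ + a.2 ⁅b.1, c.1⁆ + b.2 ⁅c.1, a.1⁆) := rfl

theorem coad_eval {k : Type*} [LieRing k] [LieAlgebra ℝ k] (u : k)
    (η : Module.Dual ℝ k) (w : k) : coad u η w = - η ⁅u, w⁆ := rfl

theorem dual_skew {k : Type*} [LieRing k] [LieAlgebra ℝ k]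
    (η : Module.Dual ℝ k) (u v : k) : η ⁅u, v⁆ = - η ⁅v, u⁆ := by
  rw [← lie_skew, map_neg]

theorem dual_skew_inner {k : Type*} [LieRing k] [LieAlgebra ℝ k]
    (η : Module.Dual ℝ k) (u v w : k) : η ⁅u, ⁅v, w⁆⁆ = - η ⁅u, ⁅w, v⁆⁆ := by
  rw [← lie_skew v w, lie_neg, map_neg]

theorem dual_jacobi {k : Type*} [LieRing k] [LieAlgebra ℝ k]
    (η : Module.Dual ℝ k) (u v w : k) :
    η ⁅u, ⁅v, w⁆⁆ + η ⁅v, ⁅w, u⁆⁆ + η ⁅w, ⁅u, v⁆⁆ = 0 := by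
  rw [← map_add, ← map_add, lie_jacobi, map_zero]

theorem dual_lie_lie {k : Type*} [LieRing k] [LieAlgebra ℝ k]
    (η : Module.Dual ℝ k) (u v w : k) :
    η ⁅⁅u, v⁆, w⁆ = - η ⁅w, ⁅u, v⁆⁆ := dual_skew η _ _

/-- The 2-term L∞-algebra of string type: `g̃₋₁ = ℝ`, `g̃₀ = k ⊕ k*`, with
`l̃₁ = 0`, `l̃₂((u,ξ),(v,η)) = ([u,v], ad*_u η − ad*_v ξ)`, `l̃₂((u,ξ),r) = 0`,
`l̃₃((u,ξ),(v,η),(w,ζ)) = −½(⟨ζ,[u,v]⟩ + ⟨ξ,[v,w]⟩ + ⟨η,[w,u]⟩)`. -/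
theorem stringType_twoTermLinfty (k : Type*) [LieRing k] [LieAlgebra ℝ k] :
    ∃ T : TwoTermLinfty (k × Module.Dual ℝ k) ℝ,
      (∀ r : ℝ, T.l1 r = 0) ∧
      (∀ a b : k × Module.Dual ℝ k, T.l2 a b =
        (⁅a.1, b.1⁆, coad a.1 b.2 - coad b.1 a.2)) ∧
      (∀ (a : k × Module.Dual ℝ k) (r : ℝ), T.l2' a r = 0) ∧
      (∀ a b c : k × Module.Dual ℝ k, T.l3 a b c =
        -(1/2 : ℝ) • (c.2 ⁅a.1, b.1⁆ + a.2 ⁅b.1, c.1⁆ + b.2 ⁅c.1, a.1⁆)) := by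
  refine ⟨{ l1 := 0, l2 := stringL2 k, l2' := 0, l3 := stringL3 k,
            skew := ?_, alt₁ := ?_, alt₂ := ?_, ident_a := ?_, ident_b := ?_,
            ident_c := ?_, ident_d := ?_, ident_e := ?_ },
    fun _ => rfl, stringL2_apply k, fun _ _ => rfl, stringL3_apply k⟩
  · intro x y
    simp [stringL2_apply]
  · rintro ⟨x, a⟩ ⟨y, b⟩ ⟨z, c⟩
    simp only [stringL3_apply, smul_eq_mul]
    linarith [dual_skew c x y, dual_skew a y z, dual_skew b z x]
  · rintro ⟨x, a⟩ ⟨y, b⟩ ⟨z, c⟩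
    simp only [stringL3_apply, smul_eq_mul]
    linarith [dual_skew c x y, dual_skew a y z, dual_skew b z x]
  · intro x m; simp
  · intro m n; simp
  · rintro ⟨x, a⟩ ⟨y, b⟩ ⟨z, c⟩
    simp only [stringL2_apply, LinearMap.zero_apply]
    ext1
    · exact lie_jacobi x y z
    · apply LinearMap.ext
      intro t
      simp only [Prod.snd_add, Prod.snd_zero, LinearMap.add_apply, LinearMap.sub_apply,
        LinearMap.zero_apply, coad_eval, lie_lie, map_sub]
      ring
  · intro x y m; simp
  · rintro ⟨w, d⟩ ⟨x, a⟩ ⟨y, b⟩ ⟨z, c⟩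
    simp only [stringL2_apply, stringL3_apply, smul_eq_mul, LinearMap.sub_apply,
      LinearMap.zero_apply, coad_eval, dual_lie_lie]
    linarith [
      dual_jacobi d x y z, dual_skew_inner d x y z, dual_skew_inner d y z x, dual_skew_inner d z x y,
      dual_jacobi a w y z, dual_skew_inner a w y z, dual_skew_inner a y z w, dual_skew_inner a z w y,
      dual_jacobi b w x z, dual_skew_inner b w x z, dual_skew_inner b x z w, dual_skew_inner b z w x,
      dual_jacobi c w x y, dual_skew_inner c w x y, dual_skew_inner c x y w, dual_skew_inner c y w x]
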